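/- The number of permutations of [n] containing exactly three occurrences of the pattern 321 is 7·C^{(10)}_{n−5} + 6·C^{(13)}_{n−7} + C^{(16)}_{n−9}, with the convention C^{(k)}_m = 0 for m < 0. -/

import Mathlib

/-!
Every permutation `π` of `[n+1]` is built uniquely from its first letter `p` and a permutation `σ`
of `[n]` (`cons p σ`). The occurrences of 321 that use the new first letter correspond to the
inversions of `σ` whose larger letter is below `p`; if `f m` counts the inversions of `σ` whose
larger letter is below `m` (`invBelow`), then `occ (cons p σ) = f p + occ σ`. Moreover the function
`f` of `cons p σ` is determined by `f` and `p` alone: it is `f` up to argument `p`, and `f` shifted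
by one and raised by `p` afterwards (`invBelow_cons`). So permutations form a generating tree
labelled by weakly increasing functions.

With a budget of at most three further occurrences, only the numbers `a, b, c, d` of arguments at
which `f` takes the values `0, 1, 2, 3` matter. Let `Phi k a b c d` be `6` times the generating
function, by number of further letters, of the ways to spend a budget of exactly `k` from such a
state. Splitting by the first letter added gives a linear functional equation with one catalytic
variable `a`. The solution is explicit: a combination of `C ^ a`, with `C = 1 + x C ^ 2` the
Catalan series, and of polynomials in `a`, with coefficients polynomial in `b, c, d`. The equations
are verified in `Phi0_rec`, ..., `Phi3_rec`, and transferred to functions `f` in `Psi_rec`.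

It follows that the sum over permutations of `[n]` of the coefficients of `x ^ r` of their series
depends only on `n + r` (`S_succ`). At `r = 0` it is `6` times the number of permutations with
three occurrences; at `n = 1` it is a coefficient of `Phi 3 2 0 0 0`, and
`x * Phi 3 2 0 0 0 = 6 (7 x^5 C^10 + 6 x^7 C^13 + x^9 C^16)` (`final_eq`). The coefficients of
`C ^ k` are the ballot numbers (`coeff_Cs_pow`).
-/

/-- The ballot number `C^{(k)}_n = C(2n+k-1, n) - C(2n+k-1, n-1)`, with `C(a,-1) = 0`. -/
def ballot (k n : ℕ) : ℕ :=
  Nat.choose (2 * n + k - 1) n - (if n = 0 then 0 else Nat.choose (2 * n + k - 1) (n - 1))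

/-- The ballot number with an integer subscript: `C^{(k)}_m = 0` for `m < 0`. -/
def ballotZ (k : ℕ) (m : ℤ) : ℕ := if 0 ≤ m then ballot k m.toNat else 0

/-- An occurrence of the pattern 321 in a permutation of `{0,…,n-1}`: a triple of
positions `i < j < k` (here `t = (i, j, k)`) with `π i > π j > π k`. -/
def IsOcc321 {n : ℕ} (π : Equiv.Perm (Fin n)) (t : Fin n × Fin n × Fin n) : Prop :=
  t.1 < t.2.1 ∧ t.2.1 < t.2.2 ∧ π t.2.2 < π t.2.1 ∧ π t.2.1 < π t.1

/-- The number of occurrences of the pattern 321 in a permutation. -/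
noncomputable def occ321Count (n : ℕ) (π : Equiv.Perm (Fin n)) : ℕ :=
  Nat.card {t : Fin n × Fin n × Fin n // IsOcc321 π t}

namespace Three321

/-! ### Weakly increasing functions and their thresholds -/

section Thr

/-- The number of arguments in `{0,…,n}` at which `f` is at most `v`. For monotone `f` these
arguments are exactly those below `thr f n v` (`lt_thr`). -/
def thr (f : ℕ → ℕ) (n v : ℕ) : ℕ := ((Finset.range (n + 1)).filter (fun m => f m ≤ v)).card

theorem lt_thr {f : ℕ → ℕ} (hf : Monotone f) {n v m : ℕ} (hm : m ≤ n) :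
    m < thr f n v ↔ f m ≤ v := by
  constructor
  · intro h
    by_contra hv
    have : (Finset.range (n + 1)).filter (fun m => f m ≤ v) ⊆ Finset.range m := by
      intro i hi
      simp only [Finset.mem_filter, Finset.mem_range] at hi ⊢
      by_contra hmi
      have := hf (not_lt.mp hmi)
      omega
    have := Finset.card_le_card this
    rw [Finset.card_range] at this
    unfold thr at h
    omega
  · intro h
    have : Finset.range (m + 1) ⊆ (Finset.range (n + 1)).filter (fun m => f m ≤ v) := by
      intro i hi
      simp only [Finset.mem_filter, Finset.mem_range] at hi ⊢
      have := hf (show i ≤ m by omega)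
      omega
    have := Finset.card_le_card this
    rw [Finset.card_range] at this
    unfold thr
    omega

theorem thr_le (f : ℕ → ℕ) (n v : ℕ) : thr f n v ≤ n + 1 := by
  simpa [thr] using Finset.card_filter_le (Finset.range (n + 1)) (fun m => f m ≤ v)

theorem thr_mono (f : ℕ → ℕ) (n : ℕ) {v w : ℕ} (h : v ≤ w) : thr f n v ≤ thr f n w := by
  apply Finset.card_le_card
  intro i
  simp only [Finset.mem_filter, Finset.mem_range]
  omega

theorem thr_eq {f : ℕ → ℕ} {n v t : ℕ} (ht : t ≤ n + 1) (h : ∀ m ≤ n, f m ≤ v ↔ m < t) :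
    thr f n v = t := by
  have : (Finset.range (n + 1)).filter (fun m => f m ≤ v) = Finset.range t := by
    ext m
    simp only [Finset.mem_filter, Finset.mem_range]
    constructor
    · rintro ⟨h1, h2⟩; exact (h m (by omega)).1 h2
    · intro h1; exact ⟨by omega, (h m (by omega)).2 h1⟩
  rw [thr, this, Finset.card_range]

/-- The function attached to the permutation obtained from one with function `f` by prepending
the letter `p`. -/
def ins (p : ℕ) (f : ℕ → ℕ) (m : ℕ) : ℕ := if m ≤ p then f m else f (m - 1) + p

theorem thr_ins {f : ℕ → ℕ} (hf : Monotone f) {n p : ℕ} (hp : p ≤ n) (w : ℕ) :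
    thr (ins p f) (n + 1) w =
      min (thr f n w) (p + 1) + (if p ≤ w then thr f n (w - p) - p else 0) := by
  have h1 := thr_le f n w
  have h2 := thr_le f n (w - p)
  have h3 := thr_mono f n (Nat.sub_le w p)
  apply thr_eq
  · split_ifs <;> omega
  · intro m hm
    unfold ins
    by_cases hmp : m ≤ p
    · rw [if_pos hmp, ← lt_thr hf (n := n) (by omega)]
      split_ifs <;> omega
    · rw [if_neg hmp]
      by_cases hw : p ≤ w
      · have := lt_thr hf (n := n) (v := w - p) (m := m - 1) (by omega)
        rw [if_pos hw]
        omega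
      · rw [if_neg hw]
        omega

theorem filter_zero {f : ℕ → ℕ} (hf : Monotone f) (n : ℕ) :
    (Finset.range (n + 1)).filter (fun m => f m = 0) = Finset.range (thr f n 0) := by
  ext m
  have := thr_le f n 0
  have h := @lt_thr f hf n 0 m
  simp only [Finset.mem_filter, Finset.mem_range]
  by_cases hm : m ≤ n
  · have := h hm; omega
  · omega

theorem filter_succ {f : ℕ → ℕ} (hf : Monotone f) (n v : ℕ) :
    (Finset.range (n + 1)).filter (fun m => f m = v + 1) =
      Finset.Ico (thr f n v) (thr f n (v + 1)) := by
  ext m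
  have := thr_le f n (v + 1)
  have h := @lt_thr f hf n v m
  have h' := @lt_thr f hf n (v + 1) m
  simp only [Finset.mem_filter, Finset.mem_range, Finset.mem_Ico]
  by_cases hm : m ≤ n
  · have := h hm; have := h' hm; omega
  · omega

/-- Summing over all `p` with `f p ≤ k`, grouped by the value of `f p`. -/
theorem sum_split {M : Type*} [AddCommMonoid M] (f : ℕ → ℕ) (n k : ℕ) (g : ℕ → ℕ → M) :
    ∑ p ∈ Finset.range (n + 1), (if f p ≤ k then g (f p) p else 0) =
      ∑ v ∈ Finset.range (k + 1), ∑ p ∈ (Finset.range (n + 1)).filter (fun m => f m = v), g v p := by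
  simp_rw [Finset.sum_filter]
  rw [Finset.sum_comm]
  refine Finset.sum_congr rfl fun p _ => ?_
  rw [Finset.sum_ite_eq (Finset.range (k + 1)) (f p) (fun v => g v p)]
  simp
end Thr

/-! ### Prepending a letter to a permutation -/

section Perm

open Equiv

variable {n : ℕ}

/-- The number of occurrences of 321, as a sum of indicators. -/
def occS (σ : Perm (Fin n)) : ℕ :=
  ∑ i, ∑ j, ∑ k, if i < j ∧ j < k ∧ σ k < σ j ∧ σ j < σ i then 1 else 0

theorem occ321Count_eq (σ : Perm (Fin n)) : occ321Count n σ = occS σ := by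
  classical
  rw [occ321Count, Nat.card_eq_fintype_card, Fintype.card_subtype, Finset.card_filter,
    Fintype.sum_prod_type, occS]
  refine Finset.sum_congr rfl fun i _ => ?_
  rw [Fintype.sum_prod_type]
  exact Finset.sum_congr rfl fun j _ => Finset.sum_congr rfl fun k _ => if_congr Iff.rfl rfl rfl

/-- The number of inversions whose larger letter is below `m`. -/
def invBelow (σ : Perm (Fin n)) (m : ℕ) : ℕ :=
  ∑ j, ∑ k, if j < k ∧ σ k < σ j ∧ (σ j : ℕ) < m then 1 else 0

theorem invBelow_mono (σ : Perm (Fin n)) : Monotone (invBelow σ) := by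
  intro a b hab
  refine Finset.sum_le_sum fun j _ => Finset.sum_le_sum fun k _ => ?_
  split_ifs with h1 h2
  · rfl
  · exact absurd ⟨h1.1, h1.2.1, h1.2.2.trans_le hab⟩ h2
  · simp
  · rfl

theorem invBelow_one (σ : Perm (Fin n)) : invBelow σ 1 = 0 := by
  refine Finset.sum_eq_zero fun j _ => Finset.sum_eq_zero fun k _ => if_neg ?_
  rintro ⟨_, h1, h2⟩
  rw [Fin.lt_def] at h1
  omega

/-- The permutation with first letter `p` whose remaining letters are in the same relative order
as those of `σ`. -/
def cons (p : Fin (n + 1)) (σ : Perm (Fin n)) : Perm (Fin (n + 1)) :=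
  (finSuccEquiv' 0).trans ((optionCongr σ).trans (finSuccEquiv' p).symm)

@[simp] theorem cons_zero (p : Fin (n + 1)) (σ : Perm (Fin n)) : cons p σ 0 = p := by
  simp [cons]

@[simp] theorem cons_succ (p : Fin (n + 1)) (σ : Perm (Fin n)) (i : Fin n) :
    cons p σ i.succ = p.succAbove (σ i) := by
  have := finSuccEquiv'_succAbove (0 : Fin (n + 1)) i
  rw [Fin.zero_succAbove] at this
  simp [cons, this]

theorem cons_bijective : Function.Bijective
    (fun q : Fin (n + 1) × Perm (Fin n) => cons q.1 q.2) := by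
  rw [Fintype.bijective_iff_injective_and_card]
  refine ⟨?_, by simp [Fintype.card_perm, Nat.factorial_succ]⟩
  rintro ⟨p, σ⟩ ⟨p', σ'⟩ h
  have h0 : p = p' := by simpa using congrArg (fun τ : Perm (Fin (n + 1)) => τ 0) h
  subst h0
  have h1 : σ = σ' := by
    ext i : 1
    have := congrArg (fun τ : Perm (Fin (n + 1)) => τ i.succ) h
    simpa using this
  rw [h1]

theorem sum_cons {M : Type*} [AddCommMonoid M] (g : Perm (Fin (n + 1)) → M) :
    ∑ π, g π = ∑ σ : Perm (Fin n), ∑ p : Fin (n + 1), g (cons p σ) := by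
  rw [← Fintype.sum_bijective _ cons_bijective _ g (fun _ => rfl), Fintype.sum_prod_type_right]

theorem occS_cons (p : Fin (n + 1)) (σ : Perm (Fin n)) :
    occS (cons p σ) = invBelow σ p + occS σ := by
  have hc (v : Fin n) : v.castSucc < p ↔ (v : ℕ) < p := Iff.rfl
  unfold occS invBelow
  simp only [Fin.sum_univ_succ, cons_zero, cons_succ, Fin.succ_lt_succ_iff, Fin.succ_pos,
    Fin.not_lt_zero, false_and, and_false, if_false, true_and, zero_add,
    Finset.sum_const_zero, Fin.succAbove_lt_succAbove_iff, Fin.succAbove_lt_iff_castSucc_lt, hc]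

/-- Exactly `p` letters of `σ` are below `p`, in whatever positions. -/
theorem card_lt (p : Fin (n + 1)) (σ : Perm (Fin n)) :
    (∑ k, if (σ k : ℕ) < p then 1 else 0) = (p : ℕ) := by
  rw [Equiv.sum_comp σ (fun v : Fin n => if (v : ℕ) < p then 1 else 0),
    Fin.sum_univ_eq_sum_range (fun v => if v < (p : ℕ) then 1 else 0) n, ← Finset.sum_filter]
  have : (Finset.range n).filter (· < (p : ℕ)) = Finset.range p := by
    ext m; simp only [Finset.mem_filter, Finset.mem_range]; omega
  simp [this]

theorem invBelow_cons (p : Fin (n + 1)) (σ : Perm (Fin n)) (m : ℕ) :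
    invBelow (cons p σ) m = ins p (invBelow σ) m := by
  have key (v : Fin n) : ((p.succAbove v : Fin (n + 1)) : ℕ) < m ↔
      (v : ℕ) < if m ≤ p then m else m - 1 := by
    rw [Fin.succAbove]
    split_ifs with h1 h2 h2 <;> simp only [Fin.lt_def, Fin.val_castSucc, Fin.val_succ] at * <;> omega
  have h1 : invBelow (cons p σ) m =
      (if (p : ℕ) < m then (p : ℕ) else 0) + invBelow σ (if m ≤ p then m else m - 1) := by
    unfold invBelow
    simp only [Fin.sum_univ_succ, cons_zero, cons_succ, Fin.succ_lt_succ_iff, Fin.succ_pos,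
      Fin.not_lt_zero, false_and, if_false, true_and, zero_add, key,
      Fin.succAbove_lt_succAbove_iff, Fin.succAbove_lt_iff_castSucc_lt]
    congr 1
    split_ifs with h
    · simpa [h, Fin.lt_def] using card_lt p σ
    · simp [h]
  rw [h1, ins]
  split_ifs <;> omega
end Perm
/-! ### The functional equations -/

section Algebra

variable {R : Type*} [CommRing R] (x C : R)

/-- The coefficient of `C ^ a` in `Phi 2 a 0 0 0 / 6`; it is determined by the functional
equation at `a = 2`. -/
def alpha : R :=
  2 * x * C ^ 4 * (1 - 2 * x) + x ^ 2 * C ^ 6 * (1 - x) ^ 2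

/-- Twice the coefficient of `a ^ 2` in `Phi 3 a 0 0 0 / 6`, for `3 ≤ a`. -/
def q2 : R := -x ^ 3 * C ^ 5
/-- Twice the coefficient of `a` in `Phi 3 a 0 0 0 / 6`, for `3 ≤ a`. -/
def q1 : R := -2 * x ^ 2 * C ^ 5 + 3 * x ^ 3 * C ^ 5 - 2 * x ^ 3 * C ^ 7 * (1 - x)
/-- Twice the constant term in `a` of `Phi 3 a 0 0 0 / 6`, for `3 ≤ a`. Together, `q0`, `q1`, `q2`
give a particular solution of the difference equation in `a`. -/
def q0 : R := -2 * x * C ^ 5 + 4 * x ^ 2 * C ^ 5 - 2 * x ^ 2 * C ^ 7 * (1 - x) - q1 x C - q2 x C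
  - (-4 * x ^ 2 * C ^ 4 + 2 * x * C ^ 3 * alpha x C - 2 * x ^ 3 * C ^ 7 * (1 - x)
      + 2 * x ^ 2 * C ^ 7 * (1 - x) + 2 * x * C ^ 5)
/-- Twice the coefficient of `C ^ a` in `Phi 3 a 0 0 0 / 6`; it is determined by the functional
equation at `a = 2`. -/
def beta : R := -(q0 x C + 2 * q1 x C + 4 * q2 x C) - 2 * x ^ 2 * C ^ 5
  + x * (2 * q0 x C + 5 * q1 x C + 13 * q2 x C) + 2 * x ^ 3 * C ^ 5
  + 2 * x * (-2 * x ^ 2 * C ^ 4 + x * C ^ 3 * alpha x C + x ^ 3 * C ^ 5 + x ^ 3 * C ^ 7 * (1 - x))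

/-- `6` times the generating function for spending a budget of exactly `k` occurrences, from a
state with `a, b, c, d` arguments of value `0, 1, 2, 3`. The factor `6` clears the denominators of
the binomial coefficients in `b` and of the halves in `q0`, `q1`, `q2`, `beta`. The arguments
beyond the budget are ignored. The correction at `a = 2` in the case `k = 3` is there because the
letter `p = 2` is then not free of cost. -/
def Phi : ℕ → ℕ → ℕ → ℕ → ℕ → R
  | 0, a, _, _, _ => 6 * C ^ a
  | 1, a, b, _, _ => 6 * (x * C ^ 3 * (1 - x) * C ^ a - x * C ^ 3 + b * (x * C * C ^ a))
  | 2, a, b, c, _ =>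
      6 * (alpha x C * C ^ a - 2 * x * C ^ 4 + 2 * x ^ 2 * C ^ 4 - x ^ 2 * C ^ 6 * (1 - x)
        - x ^ 2 * C ^ 4 * a)
      + 3 * (x ^ 2 * C ^ 2 * C ^ a * (b * (b + 1))) + 6 * (b * (x ^ 2 * C ^ 4 * (1 - x) * C ^ a))
      + 6 * (c * (x * C * C ^ a))
  | 3, a, b, c, d =>
      3 * (beta x C * C ^ a + q0 x C + q1 x C * a + q2 x C * a ^ 2)
      + (-6 * x ^ 2 * C ^ 4 * b + 6 * (x * C * alpha x C * C ^ a * b)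
        + x ^ 3 * C ^ 3 * C ^ a * (b * (b + 1) * (b + 2))
        + 3 * (x ^ 3 * C ^ 5 * (1 - x) * C ^ a * (b * (b + 1))))
      + 6 * (c * (x ^ 2 * C ^ 4 * (1 - x) * C ^ a)) + 6 * (b * c * (x ^ 2 * C ^ 2 * C ^ a))
      + 6 * (d * (x * C * C ^ a))
      + (if a = 2 then 6 * x ^ 2 * C ^ 5 - 6 * x ^ 2 * C ^ 4 * b else 0)
  | _, _, _, _, _ => 0

variable {x C}
variable (h : C = 1 + x * C ^ 2)
include h

theorem final_eq : x * Phi x C 3 2 0 0 0 =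
    6 * (7 * (x ^ 5 * C ^ 10) + 6 * (x ^ 7 * C ^ 13) + x ^ 9 * C ^ 16) := by
  simp only [Phi, beta, q0, q1, q2, alpha]
  push_cast
  grind

omit h in
theorem sum_Phi1 (a b : ℕ) : ∑ j ∈ Finset.range b, Phi x C 1 a (j + 1) 0 0 =
    6 * (b * (x * C ^ 3 * (1 - x) * C ^ a - x * C ^ 3)) + 3 * (b * (b + 1) * (x * C * C ^ a)) := by
  induction b with
  | zero => simp
  | succ b ih => rw [Finset.sum_range_succ, ih]; simp only [Phi]; push_cast; ring

omit h in
theorem sum_Phi2 (a b : ℕ) : ∑ j ∈ Finset.range b, Phi x C 2 a (j + 1) 0 0 =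
    6 * (b * (alpha x C * C ^ a - 2 * x * C ^ 4 + 2 * x ^ 2 * C ^ 4 - x ^ 2 * C ^ 6 * (1 - x)
        - x ^ 2 * C ^ 4 * a))
    + x ^ 2 * C ^ 2 * C ^ a * (b * (b + 1) * (b + 2))
    + 3 * (b * (b + 1) * (x ^ 2 * C ^ 4 * (1 - x) * C ^ a)) := by
  induction b with
  | zero => simp
  | succ b ih => rw [Finset.sum_range_succ, ih]; simp only [Phi]; push_cast; ring

/-- The contribution of the letters `p ≥ 4` in the functional equation of `Phi 0`. -/
theorem tail0 (m : ℕ) : x * ∑ t ∈ Finset.range m, Phi x C 0 (t + 5) 0 0 0 =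
    6 * (C ^ (m + 3) - C ^ 3) := by
  induction m with
  | zero => simp
  | succ m ih =>
    rw [Finset.sum_range_succ, mul_add, ih]; simp only [Phi]
    linear_combination (-6 * C ^ (m + 3)) * h

theorem tail1 (m : ℕ) : x * ∑ t ∈ Finset.range m, Phi x C 1 (t + 5) 0 0 0 =
    6 * (x * C ^ 3 * (1 - x) * (C ^ (m + 3) - C ^ 3) - m * x ^ 2 * C ^ 3) := by
  induction m with
  | zero => simp
  | succ m ih =>
    rw [Finset.sum_range_succ, mul_add, ih]; simp only [Phi]; push_cast
    linear_combination (-6 * x * C ^ 3 * (1 - x) * C ^ (m + 3)) * h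

theorem tail2 (m : ℕ) : x * ∑ t ∈ Finset.range m, Phi x C 2 (t + 5) 0 0 0 =
    6 * (alpha x C * (C ^ (m + 3) - C ^ 3) +
      m * x * (- 2 * x * C ^ 4 + 2 * x ^ 2 * C ^ 4 - x ^ 2 * C ^ 6 * (1 - x)))
      - 3 * x ^ 3 * C ^ 4 * (m * (m + 9)) := by
  induction m with
  | zero => simp
  | succ m ih =>
    rw [Finset.sum_range_succ, mul_add, ih]; simp only [Phi]; push_cast
    linear_combination (-6 * alpha x C * C ^ (m + 3)) * h

/-- The functional equation of `Phi 3` when `4 ≤ a` and `b = c = d = 0`. By induction on `a`, it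
reduces to a three-term relation for `C ^ a` and to the case `a = 4`, which fixes `beta`. -/
theorem rec3 (m : ℕ) : Phi x C 3 (m + 4) 0 0 0 =
    x * (Phi x C 3 (m + 5) 0 0 0 + Phi x C 3 2 (m + 3) 0 0 + Phi x C 3 3 0 (m + 2) 0
      + Phi x C 3 4 0 0 (m + 1)) + x * ∑ t ∈ Finset.range m, Phi x C 3 (t + 5) 0 0 0 := by
  induction m with
  | zero =>
    simp [Phi, beta, q0, q1, q2]
    grind
  | succ m ih =>
    rw [Finset.sum_range_succ, mul_add]
    simp only [Phi] at ih ⊢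
    push_cast at ih ⊢
    simp only [q0, q1, q2] at ih ⊢
    linear_combination ih + 3 * beta x C * C ^ (m + 4) * h

/-- The series attached to the state reached from `a, b, c, d` by prepending a letter `p < a`,
which creates no occurrence. -/
def child (x C : R) (k a b c d : ℕ) : ℕ → R
  | 0 => Phi x C k (a + 1) b c d
  | 1 => Phi x C k 2 (a - 1) b c
  | 2 => Phi x C k 3 0 (a - 2) b
  | 3 => Phi x C k 4 0 0 (a - 3)
  | p => Phi x C k (p + 1) 0 0 0

theorem Phi0_rec (a b c d : ℕ) (ha : 2 ≤ a) : Phi x C 0 a b c d =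
    6 + x * ∑ p ∈ Finset.range a, child x C 0 a b c d p  := by
  obtain rfl | rfl | ⟨m, rfl⟩ : a = 2 ∨ a = 3 ∨ ∃ m, a = m + 4 := by
    by_cases h4 : 4 ≤ a
    · exact .inr (.inr ⟨a - 4, by omega⟩)
    · omega
  · simp [Finset.sum_range_succ, child, Phi]
    grind
  · simp [Finset.sum_range_succ, child, Phi]
    grind
  · simp only [Finset.sum_range_succ', child, zero_add, mul_add, Finset.mul_sum]
    rw [← Finset.mul_sum, tail0 h m]
    simp only [Phi, show m + 4 - 1 = m + 3 by omega, show m + 4 - 2 = m + 2 by omega,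
      show m + 4 - 3 = m + 1 by omega]
    push_cast
    -- with `C ^ m` and `m` generic, the goal lies in the ideal generated by `C - 1 - x C ^ 2`
    simp only [pow_add]
    generalize C ^ m = z
    generalize (m : R) = m
    grind

theorem Phi1_rec (a b c d : ℕ) (ha : 2 ≤ a) : Phi x C 1 a b c d =
    x * ∑ p ∈ Finset.range a, child x C 1 a b c d p + x * (b * Phi x C 0 a 0 0 0) := by
  obtain rfl | rfl | ⟨m, rfl⟩ : a = 2 ∨ a = 3 ∨ ∃ m, a = m + 4 := by
    by_cases h4 : 4 ≤ a
    · exact .inr (.inr ⟨a - 4, by omega⟩)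
    · omega
  · simp [Finset.sum_range_succ, child, Phi]
    grind
  · simp [Finset.sum_range_succ, child, Phi]
    grind
  · simp only [Finset.sum_range_succ', child, zero_add, mul_add, Finset.mul_sum]
    rw [← Finset.mul_sum, tail1 h m]
    simp only [Phi, show m + 4 - 1 = m + 3 by omega, show m + 4 - 2 = m + 2 by omega,
      show m + 4 - 3 = m + 1 by omega]
    push_cast
    simp only [pow_add]
    generalize C ^ m = z
    generalize (m : R) = m
    grind

theorem Phi2_rec (a b c d : ℕ) (ha : 2 ≤ a) : Phi x C 2 a b c d =
    x * ∑ p ∈ Finset.range a, child x C 2 a b c d p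
      + x * (∑ j ∈ Finset.range b, Phi x C 1 a (j + 1) 0 0 + c * Phi x C 0 a 0 0 0) := by
  rw [sum_Phi1]
  obtain rfl | rfl | ⟨m, rfl⟩ : a = 2 ∨ a = 3 ∨ ∃ m, a = m + 4 := by
    by_cases h4 : 4 ≤ a
    · exact .inr (.inr ⟨a - 4, by omega⟩)
    · omega
  · simp [Finset.sum_range_succ, child, Phi, alpha]
    grind
  · simp [Finset.sum_range_succ, child, Phi, alpha]
    grind
  · simp only [Finset.sum_range_succ', child, zero_add, mul_add, Finset.mul_sum]
    rw [← Finset.mul_sum, tail2 h m]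
    simp only [Phi, show m + 4 - 1 = m + 3 by omega, show m + 4 - 2 = m + 2 by omega,
      show m + 4 - 3 = m + 1 by omega, alpha]
    push_cast
    simp only [pow_add]
    generalize C ^ m = z
    generalize (m : R) = m
    grind

theorem Phi3_rec (a b c d : ℕ) (ha : 2 ≤ a) : Phi x C 3 a b c d =
    x * ∑ p ∈ Finset.range a, child x C 3 a b c d p
      + x * (∑ j ∈ Finset.range b, Phi x C 2 a (j + 1) 0 0
      + c * Phi x C 1 a b 0 0 + d * Phi x C 0 a 0 0 0) := by
  rw [sum_Phi2]
  obtain rfl | rfl | ⟨m, rfl⟩ : a = 2 ∨ a = 3 ∨ ∃ m, a = m + 4 := by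
    by_cases h4 : 4 ≤ a
    · exact .inr (.inr ⟨a - 4, by omega⟩)
    · omega
  · simp [Finset.sum_range_succ, child, Phi, q0, q1, q2, beta]
    grind
  · simp [Finset.sum_range_succ, child, Phi, q0, q1, q2, beta]
    grind
  · have hs : ∀ t : ℕ, t + 1 + 1 + 1 + 1 + 1 = t + 5 := fun _ => rfl
    simp only [Finset.sum_range_succ', child, hs, zero_add, mul_add, Finset.mul_sum]
    have := rec3 h m
    rw [← Finset.mul_sum]
    simp only [Phi, show m + 4 - 1 = m + 3 by omega, show m + 4 - 2 = m + 2 by omega,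
      show m + 4 - 3 = m + 1 by omega] at this ⊢
    push_cast at this ⊢
    simp at this ⊢
    -- the cofactor is the coefficient of `C ^ a` in the `b, c, d`-part of `Phi 3`, divided by `C`
    linear_combination this + C ^ (m + 4) * (6 * x * alpha x C * b
      + x ^ 3 * C ^ 2 * (b * (b + 1) * (b + 2)) + 3 * x ^ 3 * C ^ 4 * (1 - x) * (b * (b + 1))
      + 6 * c * x ^ 2 * C ^ 3 * (1 - x) + 6 * b * c * x ^ 2 * C + 6 * d * x) * h
end Algebra
end Three321
namespace Three321
/-! ### Series attached to functions and permutations -/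

section Main

open PowerSeries

section Psi
variable {R : Type*} [CommRing R] (x C : R)

/-- The series `Phi k` at the state of the function `f` on `{0,…,n}`. -/
def Psi (k : ℕ) (f : ℕ → ℕ) (n : ℕ) : R :=
  Phi x C k (thr f n 0) (thr f n 1 - thr f n 0) (thr f n 2 - thr f n 1) (thr f n 3 - thr f n 2)

variable {x C}

section
variable {f : ℕ → ℕ} (hf : Monotone f) {n : ℕ}
include hf

/-- Prepending a letter of cost zero. -/
theorem Psi_child (k : ℕ) {p : ℕ} (hp : p < thr f n 0) (h2 : 2 ≤ thr f n 0) :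
    Psi x C k (ins p f) (n + 1) = child x C k (thr f n 0) (thr f n 1 - thr f n 0)
      (thr f n 2 - thr f n 1) (thr f n 3 - thr f n 2) p := by
  have hn := thr_le f n 0
  have h01 := thr_mono f n (show 0 ≤ 1 by omega)
  have h12 := thr_mono f n (show 1 ≤ 2 by omega)
  have h23 := thr_mono f n (show 2 ≤ 3 by omega)
  have T := thr_ins hf (show p ≤ n by omega)
  rw [Psi, T 0, T 1, T 2, T 3]
  match p, hp with
  | 0, _ => simp only [child]; congr 1 <;> simp <;> omega
  | 1, _ => simp only [child]; congr 1 <;> simp <;> omega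
  | 2, _ => simp only [child]; congr 1 <;> simp <;> omega
  | 3, _ => simp only [child]; congr 1 <;> simp <;> omega
  | p + 4, _ =>
    simp only [child]
    rw [if_neg (by omega), if_neg (by omega), if_neg (by omega), if_neg (by omega)]
    congr 1 <;> omega

/-- Prepending a letter of positive cost that exhausts the budget. -/
theorem Psi_zero_of_ge {p : ℕ} (hpn : p ≤ n) (hp : thr f n 0 ≤ p) (h2 : 2 ≤ thr f n 0) :
    Psi x C 0 (ins p f) (n + 1) = Phi x C 0 (thr f n 0) 0 0 0 := by
  rw [Psi, thr_ins hf hpn 0, if_neg (by omega), min_eq_left (by omega)]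
  rfl

/-- Prepending a letter of positive cost that leaves a budget of one: the values raised by
`p ≥ 2` are no longer affordable. -/
theorem Psi_one_of_ge {p : ℕ} (hpn : p ≤ n) (hp : thr f n 0 ≤ p) (h2 : 2 ≤ thr f n 0) :
    Psi x C 1 (ins p f) (n + 1) =
      Phi x C 1 (thr f n 0) (min (thr f n 1) (p + 1) - thr f n 0) 0 0 := by
  rw [Psi, thr_ins hf hpn 0, thr_ins hf hpn 1, if_neg (by omega), if_neg (by omega),
    min_eq_left (by omega)]
  rfl

/-- Prepending a letter of cost one that leaves a budget of two. Raised values stay within this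
budget only if `p = 2` and they come from the value `0`, but all arguments of value `0` are
smaller than `p`. -/
theorem Psi_two_of_ge {p : ℕ} (hpn : p ≤ n) (hp : thr f n 0 ≤ p) (hp1 : p < thr f n 1)
    (h2 : 2 ≤ thr f n 0) :
    Psi x C 2 (ins p f) (n + 1) = Phi x C 2 (thr f n 0) (p + 1 - thr f n 0) 0 0 := by
  have h12 := thr_mono f n (show 1 ≤ 2 by omega)
  have T2 : thr (ins p f) (n + 1) 2 = p + 1 := by
    rw [thr_ins hf hpn 2]
    split_ifs with h
    · have : thr f n (2 - p) = thr f n 0 := by congr 1; omega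
      omega
    · omega
  rw [Psi, thr_ins hf hpn 0, thr_ins hf hpn 1, if_neg (by omega), if_neg (by omega), T2,
    min_eq_left (by omega), min_eq_right (by omega), add_zero, add_zero, Nat.sub_self]
  rfl

variable (h : C = 1 + x * C ^ 2)
include h

/-- The functional equation in terms of `f`: the coefficient of `x ^ (r + 1)` of the series of `f`
is the sum of the coefficients of `x ^ r` over all affordable first letters. -/
theorem Psi_rec (hn : 1 ≤ n) (hf1 : f 1 = 0) {k : ℕ} (hk : k ≤ 3) :
    Psi x C k f n = (if k = 0 then 6 else 0) + x * ∑ p ∈ Finset.range (n + 1),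
      (if f p ≤ k then Psi x C (k - f p) (ins p f) (n + 1) else 0) := by
  have h2 : 2 ≤ thr f n 0 := (lt_thr hf hn).2 hf1.le
  have hn1 := thr_le f n 1
  have hn2 := thr_le f n 2
  have hn3 := thr_le f n 3
  have h01 := thr_mono f n (show 0 ≤ 1 by omega)
  have h12 := thr_mono f n (show 1 ≤ 2 by omega)
  have h23 := thr_mono f n (show 2 ≤ 3 by omega)
  have row (k : ℕ) : ∑ p ∈ Finset.range (thr f n 0), Psi x C k (ins p f) (n + 1) =
      ∑ p ∈ Finset.range (thr f n 0), child x C k (thr f n 0) (thr f n 1 - thr f n 0)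
      (thr f n 2 - thr f n 1) (thr f n 3 - thr f n 2) p :=
    Finset.sum_congr rfl fun p hp => Psi_child hf k (Finset.mem_range.1 hp) h2
  have zero {s t : ℕ} (hs : thr f n 0 ≤ s) (ht : t ≤ n + 1) :
      ∑ p ∈ Finset.Ico s t, Psi x C 0 (ins p f) (n + 1) =
        (t - s : ℕ) * Phi x C 0 (thr f n 0) 0 0 0 := by
    rw [Finset.sum_congr rfl (g := fun _ => Phi x C 0 (thr f n 0) 0 0 0), Finset.sum_const,
      Nat.card_Ico, nsmul_eq_mul]
    intro p hp
    rw [Finset.mem_Ico] at hp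
    exact Psi_zero_of_ge hf (by omega) (by omega) h2
  rw [sum_split f n k (fun v p => Psi x C (k - v) (ins p f) (n + 1))]
  interval_cases k
  · simp only [zero_add, Finset.sum_range_one, filter_zero hf, if_true, row, Nat.sub_self]
    exact Phi0_rec h _ _ _ _ h2
  · simp only [Finset.sum_range_succ, Finset.sum_range_zero, zero_add, filter_zero hf,
      filter_succ hf, row, Nat.sub_self, Nat.sub_zero, one_ne_zero, if_false, zero le_rfl hn1]
    rw [Psi, Phi1_rec h _ _ _ _ h2, mul_add]
  · have one : ∑ p ∈ Finset.Ico (thr f n 0) (thr f n 1), Psi x C 1 (ins p f) (n + 1) =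
        ∑ j ∈ Finset.range (thr f n 1 - thr f n 0), Phi x C 1 (thr f n 0) (j + 1) 0 0 := by
      rw [Finset.sum_Ico_eq_sum_range]
      refine Finset.sum_congr rfl fun j hj => ?_
      rw [Finset.mem_range] at hj
      rw [Psi_one_of_ge hf (by omega) (by omega) h2]
      congr 1; omega
    have e := filter_succ hf n 0
    have e' := filter_succ hf n 1
    simp only [zero_add, Nat.reduceAdd] at e e'
    simp only [Finset.sum_range_succ, Finset.sum_range_zero, zero_add, filter_zero hf,
      e, e', row, Nat.sub_self, Nat.sub_zero, OfNat.ofNat_ne_zero, if_false, Nat.reduceSub, one,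
      zero h01 hn2]
    rw [Psi, Phi2_rec h _ _ _ _ h2]
    ring
  · have two : ∑ p ∈ Finset.Ico (thr f n 0) (thr f n 1), Psi x C 2 (ins p f) (n + 1) =
        ∑ j ∈ Finset.range (thr f n 1 - thr f n 0), Phi x C 2 (thr f n 0) (j + 1) 0 0 := by
      rw [Finset.sum_Ico_eq_sum_range]
      refine Finset.sum_congr rfl fun j hj => ?_
      rw [Finset.mem_range] at hj
      rw [Psi_two_of_ge hf (by omega) (by omega) (by omega) h2]
      congr 1; omega
    have one : ∑ p ∈ Finset.Ico (thr f n 1) (thr f n 2), Psi x C 1 (ins p f) (n + 1) =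
        (thr f n 2 - thr f n 1 : ℕ) * Phi x C 1 (thr f n 0) (thr f n 1 - thr f n 0) 0 0 := by
      rw [Finset.sum_congr rfl (g := fun _ => Phi x C 1 (thr f n 0) (thr f n 1 - thr f n 0) 0 0),
        Finset.sum_const, Nat.card_Ico, nsmul_eq_mul]
      intro p hp
      rw [Finset.mem_Ico] at hp
      rw [Psi_one_of_ge hf (by omega) (by omega) h2, min_eq_left (by omega)]
    have e := filter_succ hf n 0
    have e' := filter_succ hf n 1
    have e'' := filter_succ hf n 2
    simp only [zero_add, Nat.reduceAdd] at e e' e''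
    simp only [Finset.sum_range_succ, Finset.sum_range_zero, zero_add, filter_zero hf,
      e, e', e'', row, Nat.sub_self, Nat.sub_zero, OfNat.ofNat_ne_zero, if_false, Nat.reduceSub,
      one, two, zero (h01.trans h12) hn3]
    rw [Psi, Phi3_rec h _ _ _ _ h2]
    ring

end
end Psi

/-! ### The Catalan series and the count -/

/-- The Catalan series over `ℤ`. -/
noncomputable def Cs : ℤ⟦X⟧ := catalanSeries.map (Nat.castRingHom ℤ)

theorem Cs_eq : Cs = 1 + X * Cs ^ 2 := by
  have := congrArg (PowerSeries.map (Nat.castRingHom ℤ)) catalanSeries_sq_mul_X_add_one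
  simp only [map_add, map_mul, map_pow, map_one, map_X] at this
  rw [Cs]
  linear_combination -this

/-- The subtraction in the definition of `ballot` does not truncate. -/
theorem ballot_eq (k n : ℕ) : (ballot k n : ℤ) = (2 * n + k - 1).choose n -
    if n = 0 then 0 else ((2 * n + k - 1).choose (n - 1) : ℤ) := by
  rw [ballot, Nat.cast_sub]
  · split_ifs <;> simp
  · rcases n with _ | n
    · simp
    · simp only [Nat.add_eq_zero_iff, one_ne_zero, and_false, if_false, Nat.add_sub_cancel]
      rcases k with _ | k
      · exact (Nat.choose_symm_of_eq_add (by omega)).le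
      · exact Nat.choose_le_succ_of_lt_half_left (by omega)

theorem coeff_Cs_pow (n k : ℕ) : coeff n (Cs ^ k) = ballot k n := by
  induction n generalizing k with
  | zero =>
    have : constantCoeff Cs = 1 := by
      rw [Cs_eq]; simp
    simp [this, ballot]
  | succ n ih =>
    induction k with
    | zero =>
      rw [ballot_eq]
      have : (2 * (n + 1) + 0 - 1).choose (n + 1) = (2 * (n + 1) + 0 - 1).choose n :=
        Nat.choose_symm_of_eq_add (by omega)
      simp [coeff_one]
      simp at this
      rw [this]; simp
    | succ k ih2 =>
      have : Cs ^ (k + 1) = Cs ^ k + X * Cs ^ (k + 2) := by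
        have := Cs_eq
        linear_combination Cs ^ k * this
      rw [this, map_add, ih2, coeff_succ_X_mul, ih, ballot_eq, ballot_eq, ballot_eq]
      have e1 : 2 * (n + 1) + (k + 1) - 1 = (2 * n + k + 1) + 1 := by omega
      have e2 : 2 * (n + 1) + k - 1 = 2 * n + k + 1 := by omega
      have e3 : 2 * n + (k + 2) - 1 = 2 * n + k + 1 := by omega
      rw [e1, e2, e3]
      rcases n with _ | n
      · simp
      · simp [Nat.choose_succ_succ]
        ring

open Equiv

/-- `6` times the number of pairs consisting of a permutation of `[n]` and a way to prepend `r`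
letters so as to have three occurrences of 321 in total; see `S_zero` for `r = 0`. -/
noncomputable def S (n r : ℕ) : ℤ := ∑ σ : Perm (Fin n),
  if occS σ ≤ 3 then coeff r (Psi X Cs (3 - occS σ) (invBelow σ) n) else 0

theorem six_eq : (6 : ℤ⟦X⟧) = PowerSeries.C (6 : ℤ) := by simp

theorem S_succ {n : ℕ} (hn : 1 ≤ n) (r : ℕ) : S n (r + 1) = S (n + 1) r := by
  rw [S, S, sum_cons]
  refine Finset.sum_congr rfl fun σ _ => ?_
  have hins (p : Fin (n + 1)) : invBelow (cons p σ) = ins p (invBelow σ) :=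
    funext fun m => invBelow_cons p σ m
  simp only [occS_cons, hins]
  rw [Fin.sum_univ_eq_sum_range (fun p => if invBelow σ p + occS σ ≤ 3 then
    coeff r (Psi X Cs (3 - (invBelow σ p + occS σ)) (ins p (invBelow σ)) (n + 1)) else 0) (n + 1)]
  by_cases h3 : occS σ ≤ 3
  · rw [if_pos h3, Psi_rec (invBelow_mono σ) Cs_eq hn (invBelow_one σ) (Nat.sub_le _ _), map_add,
      coeff_succ_X_mul, map_sum]
    have : coeff (r + 1) (if 3 - occS σ = 0 then (6 : ℤ⟦X⟧) else 0) = 0 := by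
      split_ifs
      · rw [six_eq, coeff_C, if_neg (by omega)]
      · simp
    rw [this, zero_add]
    refine Finset.sum_congr rfl fun p _ => ?_
    by_cases hp : invBelow σ p ≤ 3 - occS σ
    · rw [if_pos hp, if_pos (by omega), show 3 - occS σ - invBelow σ p =
        3 - (invBelow σ p + occS σ) by omega]
    · rw [if_neg hp, if_neg (by omega), map_zero]
  · rw [if_neg h3]
    exact (Finset.sum_eq_zero fun p _ => if_neg (by omega)).symm

theorem S_zero {n : ℕ} (hn : 1 ≤ n) :
    S n 0 = 6 * (Nat.card {π : Perm (Fin n) // occ321Count n π = 3} : ℤ) := by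
  classical
  rw [Nat.card_eq_fintype_card, Fintype.card_subtype, Finset.card_filter, S, Nat.cast_sum,
    Finset.mul_sum]
  refine Finset.sum_congr rfl fun σ _ => ?_
  rw [occ321Count_eq]
  by_cases h3 : occS σ ≤ 3
  · rw [if_pos h3, Psi_rec (invBelow_mono σ) Cs_eq hn (invBelow_one σ) (Nat.sub_le _ _), map_add,
      coeff_zero_X_mul, add_zero]
    by_cases h : occS σ = 3
    · rw [if_pos (by omega), if_pos h, six_eq, coeff_C]; simp
    · rw [if_neg (by omega), if_neg h]; simp
  · rw [if_neg h3, if_neg (by omega)]; simp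

theorem S_one (r : ℕ) : S 1 r = coeff r (Phi X Cs 3 2 0 0 0) := by
  have h0 (σ : Perm (Fin 1)) : occS σ = 0 := by simp [occS]
  have h1 (σ : Perm (Fin 1)) : invBelow σ = 0 := by funext m; simp [invBelow]
  have h2 (v : ℕ) : thr 0 1 v = 2 := by simp [thr]
  simp [S, h0, h1, Psi, h2]

theorem S_add (r m : ℕ) : S (m + 1) r = S 1 (m + r) := by
  induction m generalizing r with
  | zero => simp
  | succ m ih => rw [← S_succ (by omega), ih]; congr 1; omega

theorem coeff_ballotZ (n d k : ℕ) :
    coeff n (X ^ d * Cs ^ k) = (ballotZ k ((n : ℤ) - d) : ℤ) := by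
  rw [coeff_X_pow_mul', ballotZ]
  by_cases h : d ≤ n
  · rw [if_pos h, if_pos (by omega), coeff_Cs_pow]
    congr 2; omega
  · rw [if_neg h, if_neg (by omega)]; rfl

end Main
end Three321

open Three321 in
/-- The number of permutations of `[n]` containing exactly three occurrences of the
pattern 321 is `7·C^{(10)}_{n-5} + 6·C^{(13)}_{n-7} + C^{(16)}_{n-9}`, with
`C^{(k)}_m = 0` for `m < 0`. -/
theorem three321_count (n : ℕ) :
    Nat.card {π : Equiv.Perm (Fin n) // occ321Count n π = 3}
      = 7 * ballotZ 10 ((n : ℤ) - 5) + 6 * ballotZ 13 ((n : ℤ) - 7)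
        + ballotZ 16 ((n : ℤ) - 9) := by
  rcases n with _ | n
  · have (π : Equiv.Perm (Fin 0)) : occ321Count 0 π = 0 := by simp [occ321Count_eq, occS]
    simp [this, ballotZ]
  · have h1 := S_zero (n := n + 1) (by omega)
    rw [S_add, S_one, add_zero, ← PowerSeries.coeff_succ_X_mul, final_eq Cs_eq, six_eq,
      PowerSeries.coeff_C_mul] at h1
    have h7 : (7 : PowerSeries ℤ) = PowerSeries.C 7 := by simp
    simp only [map_add, h7, PowerSeries.coeff_C_mul, coeff_ballotZ] at h1
    apply Nat.cast_injective (R := ℤ)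
    push_cast at h1 ⊢
    linarith
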